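/- arXiv:2212.13239 — 3 statements merged into one kernel-verified Lean document; each statement's English description precedes it below -/
import Mathlib

section
/- Moment bounds for the lifted predicted measure: Let μ be any probability measure on R^d and suppose ‖Ψ‖_∞ ≤ κ_Ψ, ‖H‖_∞ ≤ κ_H, Σ ≽ σ I_d and Γ ≽ γ I_K with σ, γ > 0. Then |M(QPμ)| ≤ √(κ_Ψ² + κ_H²), and the covariance of QPμ satisfies min{γσ/(2κ_H² + γ), γ/2} · I_{d+K} ≼ C(QPμ) ≼ blockdiag(2κ_Ψ² I_d + 2Σ, 2κ_H² I_K + Γ) in the Loewner order. -/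
open MeasureTheory Matrix
open scoped BigOperators ENNReal

noncomputable section

namespace EnKF

/-- Points of `ℝ^n`, with Lebesgue measure as `volume`. -/
abbrev Vec (n : ℕ) := Fin n → ℝ

/-- Euclidean norm of a finitely indexed real vector. -/
def enorm {ι : Type*} [Fintype ι] (v : ι → ℝ) : ℝ := Real.sqrt (∑ i, v i ^ 2)

/-- The weight function `g(v) = 1 + |v|²` on `ℝ^n`. -/
def gw {n : ℕ} (v : Vec n) : ℝ := 1 + ∑ i, v i ^ 2

/-- The weight function `g(u, y) = 1 + |u|² + |y|²` on `ℝ^d × ℝ^K`. -/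
def gw2 {d K : ℕ} (p : Vec d × Vec K) : ℝ := 1 + (∑ i, p.1 i ^ 2) + (∑ j, p.2 j ^ 2)

/-- Weighted total-variation metric with weight `G`:
`d_G(μ₁, μ₂) = sup { |μ₁[f] − μ₂[f]| : f measurable, |f| ≤ G pointwise }`. -/
def dG {E : Type*} [MeasurableSpace E] (G : E → ℝ) (μ₁ μ₂ : Measure E) : ℝ :=
  ⨆ f : {f : E → ℝ // Measurable f ∧ ∀ v, |f v| ≤ G v},
    |(∫ v, f.1 v ∂μ₁) - ∫ v, f.1 v ∂μ₂|

/-- Loewner order on symmetric matrices: `loe A B ↔ A ≼ B`. -/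
def loe {ι : Type*} [Fintype ι] (A B : Matrix ι ι ℝ) : Prop := (B - A).PosSemidef

/-- Mean vector of a measure on `ℝ^n`. -/
def mean {n : ℕ} (μ : Measure (Vec n)) : Vec n := fun i => ∫ v, v i ∂μ

/-- Covariance matrix of a measure on `ℝ^n`. -/
def cov {n : ℕ} (μ : Measure (Vec n)) : Matrix (Fin n) (Fin n) ℝ :=
  Matrix.of fun i j => ∫ v, (v i - mean μ i) * (v j - mean μ j) ∂μ

/-- Density of the Gaussian `N(m, S)` on `ℝ^n`. -/
def gaussDensity {n : ℕ} (m : Vec n) (S : Matrix (Fin n) (Fin n) ℝ) (x : Vec n) : ℝ :=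
  (Real.sqrt ((2 * Real.pi) ^ n * S.det))⁻¹ *
    Real.exp (-(1 / 2) * ((x - m) ⬝ᵥ (S⁻¹ *ᵥ (x - m))))

/-- The (nondegenerate) Gaussian measure `N(m, S)` on `ℝ^n`. -/
def gauss {n : ℕ} (m : Vec n) (S : Matrix (Fin n) (Fin n) ℝ) : Measure (Vec n) :=
  volume.withDensity fun x => ENNReal.ofReal (gaussDensity m S x)

/-- Gaussian projection `G` on `ℝ^n`: the Gaussian with the same mean and covariance. -/
def Gproj {n : ℕ} (μ : Measure (Vec n)) : Measure (Vec n) := gauss (mean μ) (cov μ)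

variable {d K : ℕ}

/-- Mean of the first (state) marginal of a measure on `ℝ^d × ℝ^K`. -/
def meanU (π : Measure (Vec d × Vec K)) : Vec d := fun i => ∫ p, p.1 i ∂π

/-- Mean of the second (data) marginal of a measure on `ℝ^d × ℝ^K`. -/
def meanY (π : Measure (Vec d × Vec K)) : Vec K := fun j => ∫ p, p.2 j ∂π

/-- Block `C^{uu}` of the covariance of a measure on `ℝ^d × ℝ^K`. -/
def covUU (π : Measure (Vec d × Vec K)) : Matrix (Fin d) (Fin d) ℝ :=
  Matrix.of fun i j => ∫ p, (p.1 i - meanU π i) * (p.1 j - meanU π j) ∂π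

/-- Block `C^{uy}` of the covariance of a measure on `ℝ^d × ℝ^K`. -/
def covUY (π : Measure (Vec d × Vec K)) : Matrix (Fin d) (Fin K) ℝ :=
  Matrix.of fun i j => ∫ p, (p.1 i - meanU π i) * (p.2 j - meanY π j) ∂π

/-- Block `C^{yy}` of the covariance of a measure on `ℝ^d × ℝ^K`. -/
def covYY (π : Measure (Vec d × Vec K)) : Matrix (Fin K) (Fin K) ℝ :=
  Matrix.of fun i j => ∫ p, (p.2 i - meanY π i) * (p.2 j - meanY π j) ∂π

/-- Full covariance matrix of a measure on `ℝ^d × ℝ^K`, in block form. -/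
def covBlock (π : Measure (Vec d × Vec K)) : Matrix (Fin d ⊕ Fin K) (Fin d ⊕ Fin K) ℝ :=
  Matrix.fromBlocks (covUU π) (covUY π) (covUY π)ᵀ (covYY π)

/-- Density of a Gaussian on `ℝ^d × ℝ^K` with mean `(mu, my)` and covariance `S`. -/
def jointGaussDensity (mu : Vec d) (my : Vec K)
    (S : Matrix (Fin d ⊕ Fin K) (Fin d ⊕ Fin K) ℝ) (p : Vec d × Vec K) : ℝ :=
  (Real.sqrt ((2 * Real.pi) ^ (d + K) * S.det))⁻¹ *
    Real.exp (-(1 / 2) *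
      (Sum.elim (p.1 - mu) (p.2 - my) ⬝ᵥ (S⁻¹ *ᵥ Sum.elim (p.1 - mu) (p.2 - my))))

/-- Gaussian measure on `ℝ^d × ℝ^K` with mean `(mu, my)` and covariance `S`. -/
def jointGauss (mu : Vec d) (my : Vec K)
    (S : Matrix (Fin d ⊕ Fin K) (Fin d ⊕ Fin K) ℝ) : Measure (Vec d × Vec K) :=
  volume.withDensity fun p => ENNReal.ofReal (jointGaussDensity mu my S p)

/-- Density of the Gaussian projection of a measure on `ℝ^d × ℝ^K`. -/
def gProjDensity2 (π : Measure (Vec d × Vec K)) : Vec d × Vec K → ℝ :=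
  jointGaussDensity (meanU π) (meanY π) (covBlock π)

/-- Gaussian projection on `ℝ^d × ℝ^K`. -/
def Gproj2 (π : Measure (Vec d × Vec K)) : Measure (Vec d × Vec K) :=
  jointGauss (meanU π) (meanY π) (covBlock π)

/-- Prediction operator `P`: the law of `Ψ(V) + ξ`, `V ∼ μ` independent of `ξ ∼ N(0, Σ)`. -/
def Pop (Psi : Vec d → Vec d) (Sig : Matrix (Fin d) (Fin d) ℝ)
    (μ : Measure (Vec d)) : Measure (Vec d) :=
  (μ.prod (gauss 0 Sig)).map fun p => Psi p.1 + p.2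

/-- Lifting operator `Q`: the law of `(U, H(U) + η)`, `U ∼ μ` independent of `η ∼ N(0, Γ)`. -/
def Qop (H : Vec d → Vec K) (Gam : Matrix (Fin K) (Fin K) ℝ)
    (μ : Measure (Vec d)) : Measure (Vec d × Vec K) :=
  (μ.prod (gauss 0 Gam)).map fun p => (p.1, H p.1 + p.2)

/-- Lebesgue density of `Pμ`. -/
def predDensity (Psi : Vec d → Vec d) (Sig : Matrix (Fin d) (Fin d) ℝ)
    (μ : Measure (Vec d)) (u : Vec d) : ℝ :=
  (Real.sqrt ((2 * Real.pi) ^ d * Sig.det))⁻¹ *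
    ∫ v, Real.exp (-(1 / 2) * ((u - Psi v) ⬝ᵥ (Sig⁻¹ *ᵥ (u - Psi v)))) ∂μ

/-- Lebesgue density of `QPμ` on `ℝ^d × ℝ^K`. -/
def qpDensity (Psi : Vec d → Vec d) (Sig : Matrix (Fin d) (Fin d) ℝ)
    (H : Vec d → Vec K) (Gam : Matrix (Fin K) (Fin K) ℝ)
    (μ : Measure (Vec d)) (p : Vec d × Vec K) : ℝ :=
  predDensity Psi Sig μ p.1 * gaussDensity (H p.1) Gam p.2

/-- Conditioning operator `B` applied to a (joint) density `f` and a datum `y†`: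
the measure on `ℝ^d` with density `u ↦ f(u, y†) / ∫ f(U, y†) dU`. -/
def condM (f : Vec d × Vec K → ℝ) (ydag : Vec K) : Measure (Vec d) :=
  volume.withDensity fun u => ENNReal.ofReal (f (u, ydag) / ∫ U, f (U, ydag))

/-- Kalman transport operator `T`: the pushforward of `π` under
`(u, y) ↦ u + C^{uy}(π) C^{yy}(π)⁻¹ (y† − y)`. -/
def Top (ydag : Vec K) (π : Measure (Vec d × Vec K)) : Measure (Vec d) :=
  π.map fun p => p.1 + covUY π *ᵥ ((covYY π)⁻¹ *ᵥ (ydag - p.2))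

/-- Operator (spectral) norm of a real matrix. -/
def opNorm {ι : Type*} [Fintype ι] {κ : Type*} [Fintype κ] (A : Matrix ι κ ℝ) : ℝ :=
  ⨆ x : {x : κ → ℝ // ∑ i, x i ^ 2 ≤ 1}, enorm (A *ᵥ x.1)

/-- Frobenius norm of a real matrix. -/
def frobNorm {ι κ : Type*} [Fintype ι] [Fintype κ] (A : Matrix ι κ ℝ) : ℝ :=
  Real.sqrt (∑ i, ∑ j, A i j ^ 2)

/-- Weighted norm `|x|_S = |S^{-1/2} x|`, i.e. `√(xᵀ S⁻¹ x)`. -/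
def wnorm {n : ℕ} (S : Matrix (Fin n) (Fin n) ℝ) (x : Vec n) : ℝ :=
  Real.sqrt (x ⬝ᵥ (S⁻¹ *ᵥ x))

/-- The set `𝒫_R(ℝ^n)` of probability measures with `|M(μ)| ≤ R` and
`R⁻² I ≼ C(μ) ≼ R² I`. -/
def PR (n : ℕ) (R : ℝ) : Set (Measure (Vec n)) :=
  {μ | IsProbabilityMeasure μ ∧ enorm (mean μ) ≤ R ∧
    loe ((R ^ 2)⁻¹ • 1) (cov μ) ∧ loe (cov μ) (R ^ 2 • 1)}

/-- The set `𝒫_R(ℝ^d × ℝ^K)`. -/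
def PR2 (d K : ℕ) (R : ℝ) : Set (Measure (Vec d × Vec K)) :=
  {π | IsProbabilityMeasure π ∧ enorm (Sum.elim (meanU π) (meanY π)) ≤ R ∧
    loe ((R ^ 2)⁻¹ • 1) (covBlock π) ∧ loe (covBlock π) (R ^ 2 • 1)}

/-- Smallest eigenvalue of a symmetric matrix (Rayleigh quotient form). -/
def lambdaMin {ι : Type*} [Fintype ι] (A : Matrix ι ι ℝ) : ℝ :=
  ⨅ x : {x : ι → ℝ // ∑ i, x i ^ 2 = 1}, x.1 ⬝ᵥ (A *ᵥ x.1)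

/-- Kullback–Leibler divergence `KL(μ₁ ‖ μ₂) = ∫ (dμ₁/dμ₂) log (dμ₁/dμ₂) dμ₂`. -/
def kl {E : Type*} [MeasurableSpace E] (μ₁ μ₂ : Measure E) : ℝ :=
  ∫ v, ((μ₁.rnDeriv μ₂ v).toReal * Real.log (μ₁.rnDeriv μ₂ v).toReal) ∂μ₂


section Auxiliary

open ProbabilityTheory

lemma map_withDensity_comp {α β : Type*} [MeasurableSpace α] [MeasurableSpace β]
    (ρ : Measure α) {T : α → β} (hT : Measurable T) {h : β → ℝ≥0∞} (hh : Measurable h) :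
    (ρ.withDensity (h ∘ T)).map T = (ρ.map T).withDensity h := by
  ext s hs
  rw [Measure.map_apply hT hs, withDensity_apply _ (hT hs), withDensity_apply _ hs,
    setLIntegral_map hs hh hT]
  rfl

lemma gaussDensity_zero_one {n : ℕ} (x : Vec n) :
    gaussDensity 0 1 x = ∏ i, gaussianPDFReal 0 1 (x i) := by
  simp only [gaussDensity, gaussianPDFReal_def, Finset.prod_mul_distrib,
    ← Real.exp_sum, Matrix.det_one, inv_one, Matrix.one_mulVec, sub_zero, NNReal.coe_one,
    mul_one, Finset.prod_const, Finset.card_univ, Fintype.card_fin, dotProduct,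
    ← Finset.sum_div, Finset.sum_neg_distrib]
  congr 1
  · rw [inv_pow, _root_.inv_inj, Real.sqrt_eq_iff_mul_self_eq (by positivity) (by positivity),
      ← mul_pow, Real.mul_self_sqrt (by positivity)]
  · congr 1
    simp only [← pow_two]
    ring

lemma gauss_zero_one (n : ℕ) :
    gauss (0 : Vec n) 1 = Measure.pi fun _ => gaussianReal 0 1 := by
  symm
  refine Measure.pi_eq fun s hs => ?_
  have hint (i : Fin n) : Integrable (gaussianPDFReal 0 1)
      (volume.restrict (s i)) :=
    (integrable_gaussianPDFReal 0 1).restrict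
  rw [gauss, withDensity_apply _ (MeasurableSet.univ_pi hs), volume_pi, Measure.restrict_pi_pi]
  simp only [gaussDensity_zero_one]
  rw [← ofReal_integral_eq_lintegral_ofReal (Integrable.fintype_prod hint)
      (.of_forall fun x => Finset.prod_nonneg fun i _ =>
        gaussianPDFReal_nonneg _ _ _),
    integral_fintype_prod_eq_prod (fun _ => gaussianPDFReal 0 1),
    ENNReal.ofReal_prod_of_nonneg fun i _ => integral_nonneg fun x =>
        gaussianPDFReal_nonneg _ _ _]
  refine Finset.prod_congr rfl fun i _ => ?_
  rw [gaussianReal_apply_eq_integral 0 one_ne_zero]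

lemma continuous_gaussDensity {n : ℕ} (m : Vec n) (S : Matrix (Fin n) (Fin n) ℝ) :
    Continuous (gaussDensity m S) := by
  unfold gaussDensity
  fun_prop

lemma gauss_zero_mul_transpose {n : ℕ} (B : Matrix (Fin n) (Fin n) ℝ) (hB : B.det ≠ 0) :
    gauss 0 (B * Bᵀ) = (gauss 0 1).map fun x => B *ᵥ x := by
  have hunit : IsUnit B.det := isUnit_iff_ne_zero.mpr hB
  have hT : Measurable fun x : Vec n => B *ᵥ x := by fun_prop
  have hdens : (fun x : Vec n => ENNReal.ofReal (gaussDensity 0 1 x)) =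
      (fun z => ENNReal.ofReal (gaussDensity 0 1 (B⁻¹ *ᵥ z))) ∘ fun x => B *ᵥ x := by
    funext x
    simp [Matrix.nonsing_inv_mul _ hunit]
  have hmeas : Measurable fun z : Vec n => ENNReal.ofReal (gaussDensity 0 1 (B⁻¹ *ᵥ z)) :=
    ((continuous_gaussDensity 0 1).measurable.comp (by fun_prop)).ennreal_ofReal
  have hmap : (volume : Measure (Vec n)).map (fun x => B *ᵥ x) =
      ENNReal.ofReal |B.det⁻¹| • volume := by
    rw [← Real.map_matrix_volume_pi_eq_smul_volume_pi hB]
    rfl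
  rw [gauss, gauss, hdens, map_withDensity_comp _ hT hmeas, hmap, withDensity_smul_measure,
    ← withDensity_smul _ hmeas]
  congr 1
  funext z
  simp only [Pi.smul_apply, smul_eq_mul]
  rw [← ENNReal.ofReal_mul (abs_nonneg _)]
  congr 1
  simp only [gaussDensity, sub_zero, inv_one, Matrix.one_mulVec, Matrix.det_one, mul_one,
    Matrix.det_mul, Matrix.det_transpose]
  rw [← mul_assoc |B.det⁻¹|]
  congr 1
  · rw [Real.sqrt_mul (by positivity : (0 : ℝ) ≤ (2 * Real.pi) ^ n), Real.sqrt_mul_self_eq_abs,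
      mul_inv, abs_inv, mul_comm]
  · rw [Matrix.mul_inv_rev, ← Matrix.mulVec_mulVec, ← Matrix.transpose_nonsing_inv,
      Matrix.dotProduct_mulVec, Matrix.vecMul_transpose]

lemma exists_eq_mul_transpose {n : ℕ} {c : ℝ} (hc : 0 < c) {S : Matrix (Fin n) (Fin n) ℝ}
    (hS : loe (c • 1) S) : ∃ B : Matrix (Fin n) (Fin n) ℝ, B.det ≠ 0 ∧ S = B * Bᵀ := by
  have hpos : S.PosDef := by
    have h := (Matrix.PosDef.one (n := Fin n) (R := ℝ)).smul hc
    simpa using h.add_posSemidef hS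
  open scoped MatrixOrder in
  obtain ⟨C, hC⟩ := CStarAlgebra.nonneg_iff_eq_star_mul_self.mp hpos.posSemidef.nonneg
  have hC' : S = Cᵀ * Cᵀᵀ := by
    simpa [Matrix.star_eq_conjTranspose, Matrix.conjTranspose_eq_transpose_of_trivial] using hC
  refine ⟨Cᵀ, fun h0 => hpos.det_pos.ne' ?_, hC'⟩
  rw [hC', Matrix.det_mul, h0, zero_mul]

/-- A centred probability measure with square-integrable coordinates and covariance `S`. -/
structure IsCentered {n : ℕ} (ν : Measure (Vec n)) (S : Matrix (Fin n) (Fin n) ℝ) : Prop where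
  isProbabilityMeasure : IsProbabilityMeasure ν
  memLp (i : Fin n) : MemLp (fun x => x i) 2 ν
  integral_eval (i : Fin n) : ∫ x, x i ∂ν = 0
  variance_dotProduct (a : Vec n) :
    variance (fun x => a ⬝ᵥ x) ν = a ⬝ᵥ (S *ᵥ a)

lemma isCentered_gauss_zero_one (n : ℕ) : IsCentered (gauss (0 : Vec n) 1) 1 := by
  rw [gauss_zero_one]
  refine ⟨inferInstance, fun i => ?_, fun i => ?_, fun a => ?_⟩
  · exact (memLp_id_gaussianReal 2).comp_measurePreserving
      (measurePreserving_eval _ i)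
  · exact (measurePreserving_eval (fun _ : Fin n => gaussianReal 0 1) i).hasLaw.integral_eq.trans
      integral_id_gaussianReal
  · have h := variance_sum_pi
      (μ := fun _ : Fin n => gaussianReal 0 1) (X := fun i x => a i * x)
      fun i => (memLp_id_gaussianReal 2).const_mul (a i)
    have hfun : (fun x : Vec n => a ⬝ᵥ x) = ∑ i, fun x : Vec n => a i * x i := by
      ext x; simp [dotProduct]
    rw [Matrix.one_mulVec, hfun, h]
    refine Finset.sum_congr rfl fun i _ => ?_
    rw [variance_const_mul, variance_fun_id_gaussianReal, NNReal.coe_one, mul_one, pow_two]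

lemma isCentered_gauss {n : ℕ} {c : ℝ} (hc : 0 < c) {S : Matrix (Fin n) (Fin n) ℝ}
    (hS : loe (c • 1) S) : IsCentered (gauss 0 S) S := by
  obtain ⟨B, hB, rfl⟩ := exists_eq_mul_transpose hc hS
  rw [gauss_zero_mul_transpose B hB]
  have hstd := isCentered_gauss_zero_one n
  have := hstd.isProbabilityMeasure
  have hT : Measurable fun x : Vec n => B *ᵥ x := by fun_prop
  refine ⟨Measure.isProbabilityMeasure_map hT.aemeasurable, fun i => ?_, fun i => ?_, fun a => ?_⟩
  · refine (memLp_map_measure_iff (measurable_pi_apply i).aestronglyMeasurable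
      hT.aemeasurable).mpr ?_
    have h : MemLp (fun x : Vec n => ∑ j, B i j * x j) 2 (gauss 0 1) :=
      memLp_finsetSum _ fun j _ => (hstd.memLp j).const_mul (B i j)
    exact h
  · rw [integral_map hT.aemeasurable (measurable_pi_apply i).aestronglyMeasurable]
    simp only [Matrix.mulVec, dotProduct]
    rw [integral_finsetSum _ fun j _ => ((hstd.memLp j).integrable one_le_two).const_mul _]
    simp [integral_const_mul, hstd.integral_eval]
  · rw [variance_map (by fun_prop) hT.aemeasurable]
    have : (fun x => a ⬝ᵥ x) ∘ (fun x => B *ᵥ x) = fun x => (Bᵀ *ᵥ a) ⬝ᵥ x := by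
      funext x
      simp [Matrix.dotProduct_mulVec, Matrix.mulVec_transpose]
    rw [this, hstd.variance_dotProduct, Matrix.one_mulVec, ← Matrix.mulVec_mulVec,
      Matrix.dotProduct_mulVec a, Matrix.mulVec_transpose]

lemma loe_of_dotProduct_mulVec_le {ι : Type*} [Fintype ι] {A B : Matrix ι ι ℝ}
    (hA : A.IsSymm) (hB : B.IsSymm) (h : ∀ x, x ⬝ᵥ (A *ᵥ x) ≤ x ⬝ᵥ (B *ᵥ x)) : loe A B := by
  refine Matrix.PosSemidef.of_dotProduct_mulVec_nonneg ?_ fun x => ?_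
  · rw [Matrix.IsHermitian, Matrix.conjTranspose_eq_transpose_of_trivial]
    exact hB.sub hA
  · rw [star_trivial, Matrix.sub_mulVec, dotProduct_sub]
    exact sub_nonneg.mpr (h x)

lemma loe.dotProduct_mulVec_le {ι : Type*} [Fintype ι] {A B : Matrix ι ι ℝ} (h : loe A B)
    (x : ι → ℝ) : x ⬝ᵥ (A *ᵥ x) ≤ x ⬝ᵥ (B *ᵥ x) := by
  have := Matrix.PosSemidef.dotProduct_mulVec_nonneg h x
  rw [star_trivial, Matrix.sub_mulVec, dotProduct_sub] at this
  exact sub_nonneg.mp this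

lemma loe.isSymm_right {n : ℕ} {c : ℝ} {S : Matrix (Fin n) (Fin n) ℝ} (h : loe (c • 1) S) :
    S.IsSymm := by
  have h1 : (S - c • 1)ᵀ = S - c • 1 := by
    rw [← Matrix.conjTranspose_eq_transpose_of_trivial]
    exact h.1
  simpa [Matrix.IsSymm, Matrix.transpose_sub] using h1

lemma memLp_dotProduct {Ω : Type*} [MeasurableSpace Ω] {ρ : Measure Ω} {n : ℕ} {F : Ω → Vec n}
    {p : ℝ≥0∞} (hF : ∀ i, MemLp (fun ω => F ω i) p ρ) (a : Vec n) :
    MemLp (fun ω => a ⬝ᵥ F ω) p ρ :=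
  memLp_finsetSum _ fun i _ => (hF i).const_mul (a i)

lemma sq_dotProduct_le {n : ℕ} {κ : ℝ} (b v : Vec n) (hv : enorm v ≤ κ) :
    (b ⬝ᵥ v) ^ 2 ≤ κ ^ 2 * (b ⬝ᵥ b) := by
  have h1 := (Real.sqrt_le_iff.mp hv).2
  calc (b ⬝ᵥ v) ^ 2 ≤ (∑ i, b i ^ 2) * ∑ i, v i ^ 2 := Finset.sum_mul_sq_le_sq_mul_sq _ _ _
    _ ≤ (∑ i, b i ^ 2) * κ ^ 2 := by gcongr
    _ = κ ^ 2 * (b ⬝ᵥ b) := by simp only [dotProduct, pow_two (b _), mul_comm]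

section BoundedMaps

variable {Ω : Type*} [MeasurableSpace Ω] {ρ : Measure Ω} [IsProbabilityMeasure ρ] {n : ℕ}
  {F : Ω → Vec n} {κ : ℝ}

lemma memLp_eval_of_enorm_le (hF : Measurable F) (hb : ∀ ω, enorm (F ω) ≤ κ) (i : Fin n) :
    MemLp (fun ω => F ω i) 2 ρ := by
  refine MemLp.of_bound (by fun_prop) κ (.of_forall fun ω => ?_)
  obtain ⟨h0, h1⟩ := Real.sqrt_le_iff.mp (hb ω)
  rw [Real.norm_eq_abs]
  exact abs_le_of_sq_le_sq
    ((Finset.single_le_sum (fun j _ => sq_nonneg (F ω j)) (Finset.mem_univ i)).trans h1) h0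

lemma variance_dotProduct_le (hF : Measurable F) (hb : ∀ ω, enorm (F ω) ≤ κ) (b : Vec n) :
    Var[fun ω => b ⬝ᵥ F ω; ρ] ≤ κ ^ 2 * (b ⬝ᵥ b) := by
  have hL : MemLp (fun ω => b ⬝ᵥ F ω) 2 ρ := memLp_dotProduct (memLp_eval_of_enorm_le hF hb) b
  calc Var[fun ω => b ⬝ᵥ F ω; ρ] ≤ ∫ ω, (b ⬝ᵥ F ω) ^ 2 ∂ρ :=
        variance_le_expectation_sq hL.aestronglyMeasurable
    _ ≤ ∫ _, κ ^ 2 * (b ⬝ᵥ b) ∂ρ :=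
        integral_mono hL.integrable_sq (integrable_const _) fun ω => sq_dotProduct_le b _ (hb ω)
    _ = κ ^ 2 * (b ⬝ᵥ b) := by simp

lemma sum_sq_integral_le (hF : Measurable F) (hb : ∀ ω, enorm (F ω) ≤ κ) :
    ∑ i, (∫ ω, F ω i ∂ρ) ^ 2 ≤ κ ^ 2 := by
  set m : Vec n := fun i => ∫ ω, F ω i ∂ρ with hm
  have hL (i : Fin n) : MemLp (fun ω => F ω i) 2 ρ := memLp_eval_of_enorm_le hF hb i
  have hmF : MemLp (fun ω => m ⬝ᵥ F ω) 2 ρ := memLp_dotProduct hL m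
  have hmean : ∫ ω, m ⬝ᵥ F ω ∂ρ = m ⬝ᵥ m := by
    simp only [dotProduct]
    rw [integral_finsetSum _ fun i _ => ((hL i).integrable one_le_two).const_mul _]
    simp only [integral_const_mul, hm]
  have hvar := variance_eq_sub hmF
  have hnonneg := variance_nonneg (fun ω => m ⬝ᵥ F ω) ρ
  have hle : ∫ ω, (m ⬝ᵥ F ω) ^ 2 ∂ρ ≤ κ ^ 2 * (m ⬝ᵥ m) := by
    simpa using integral_mono hmF.integrable_sq (integrable_const (κ ^ 2 * (m ⬝ᵥ m)))
      fun ω => sq_dotProduct_le m _ (hb ω)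
  have hsq : (m ⬝ᵥ m) ^ 2 ≤ κ ^ 2 * (m ⬝ᵥ m) := by
    simp only [Pi.pow_apply] at hvar
    rw [hmean] at hvar
    linarith
  have hsum : ∑ i, (∫ ω, F ω i ∂ρ) ^ 2 = m ⬝ᵥ m := by simp only [dotProduct, hm, pow_two]
  rw [hsum]
  by_contra! hlt
  nlinarith [sq_nonneg κ]

end BoundedMaps

lemma sq_covariance_le {Ω : Type*} [MeasurableSpace Ω] {ρ : Measure Ω} [IsProbabilityMeasure ρ]
    {X Y : Ω → ℝ} (hX : MemLp X 2 ρ) (hY : MemLp Y 2 ρ) :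
    cov[X, Y; ρ] ^ 2 ≤ Var[X; ρ] * Var[Y; ρ] := by
  have h : discrim Var[X; ρ] (2 * cov[X, Y; ρ]) Var[Y; ρ] ≤ 0 := by
    refine discrim_le_zero fun t => ?_
    have h := variance_nonneg (fun ω => t * X ω + Y ω) ρ
    rw [variance_fun_add (hX.const_mul t) hY, variance_const_mul, covariance_const_mul_left] at h
    linarith
  rw [discrim] at h
  linarith

section Covariance

variable {π : Measure (Vec d × Vec K)}

lemma isSymm_covBlock : (covBlock π).IsSymm := by
  refine Matrix.IsSymm.fromBlocks ?_ rfl ?_ <;>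
  · ext i j
    simp [covUU, covYY, mul_comm]

lemma dotProduct_covBlock_mulVec [IsProbabilityMeasure π]
    (hU : ∀ i, MemLp (fun p : Vec d × Vec K => p.1 i) 2 π)
    (hY : ∀ j, MemLp (fun p : Vec d × Vec K => p.2 j) 2 π) (w : Fin d ⊕ Fin K → ℝ) :
    w ⬝ᵥ (covBlock π *ᵥ w) =
      Var[fun p => (w ∘ Sum.inl) ⬝ᵥ p.1 + (w ∘ Sum.inr) ⬝ᵥ p.2; π] := by
  let X : Fin d ⊕ Fin K → Vec d × Vec K → ℝ :=
    Sum.elim (fun i p => p.1 i) fun j p => p.2 j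
  have hX (i : Fin d ⊕ Fin K) : MemLp (X i) 2 π := by
    rcases i with i | j
    exacts [hU i, hY j]
  have hcov (i j : Fin d ⊕ Fin K) : covBlock π i j = cov[X i, X j; π] := by
    rcases i with i | i <;> rcases j with j | j
    · rfl
    · rfl
    · rw [covariance_comm]
      rfl
    · rfl
  have hfun : (fun p : Vec d × Vec K => (w ∘ Sum.inl) ⬝ᵥ p.1 + (w ∘ Sum.inr) ⬝ᵥ p.2) =
      fun p => ∑ i, w i * X i p := by
    funext p
    simp [X, dotProduct]
  rw [hfun, variance_fun_sum fun i => (hX i).const_mul (w i)]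
  simp only [dotProduct, Matrix.mulVec, Finset.mul_sum]
  refine Finset.sum_congr rfl fun i _ => Finset.sum_congr rfl fun j _ => ?_
  rw [covariance_const_mul_left, covariance_const_mul_right, hcov]
  ring

end Covariance

section Prediction

variable {Psi : Vec d → Vec d} {Sig : Matrix (Fin d) (Fin d) ℝ} {μ : Measure (Vec d)}
  [IsProbabilityMeasure μ]

lemma measurable_fst_add_snd (hPsi : Measurable Psi) :
    Measurable fun p : Vec d × Vec d => Psi p.1 + p.2 := by fun_prop

lemma isProbabilityMeasure_Pop (hPsi : Measurable Psi) (hg : IsCentered (gauss 0 Sig) Sig) :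
    IsProbabilityMeasure (Pop Psi Sig μ) :=
  have := hg.isProbabilityMeasure
  Measure.isProbabilityMeasure_map (measurable_fst_add_snd hPsi).aemeasurable

lemma memLp_eval_Pop (hPsi : Measurable Psi) (hg : IsCentered (gauss 0 Sig) Sig)
    (hL : ∀ i, MemLp (fun v => Psi v i) 2 μ) (i : Fin d) :
    MemLp (fun u => u i) 2 (Pop Psi Sig μ) := by
  have := hg.isProbabilityMeasure
  refine (memLp_map_measure_iff (measurable_pi_apply i).aestronglyMeasurable
    (measurable_fst_add_snd hPsi).aemeasurable).mpr ?_
  exact ((hL i).comp_fst _).add ((hg.memLp i).comp_snd μ)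

lemma integral_eval_Pop (hPsi : Measurable Psi) (hg : IsCentered (gauss 0 Sig) Sig)
    (hL : ∀ i, MemLp (fun v => Psi v i) 2 μ) (i : Fin d) :
    ∫ u, u i ∂(Pop Psi Sig μ) = ∫ v, Psi v i ∂μ := by
  have := hg.isProbabilityMeasure
  rw [Pop, integral_map (measurable_fst_add_snd hPsi).aemeasurable
    (measurable_pi_apply i).aestronglyMeasurable]
  simp only [Pi.add_apply]
  rw [integral_add (((hL i).comp_fst _).integrable one_le_two)
    (((hg.memLp i).comp_snd μ).integrable one_le_two), integral_fun_fst (fun v => Psi v i),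
    integral_fun_snd (fun x : Vec d => x i)]
  simp [hg.integral_eval]

lemma variance_dotProduct_Pop (hPsi : Measurable Psi) (hg : IsCentered (gauss 0 Sig) Sig)
    (hL : ∀ i, MemLp (fun v => Psi v i) 2 μ) (a : Vec d) :
    Var[fun u => a ⬝ᵥ u; Pop Psi Sig μ] = Var[fun v => a ⬝ᵥ Psi v; μ] + a ⬝ᵥ (Sig *ᵥ a) := by
  have := hg.isProbabilityMeasure
  rw [Pop, variance_map (by fun_prop) (measurable_fst_add_snd hPsi).aemeasurable,
    ← hg.variance_dotProduct, ← variance_add_prod (memLp_dotProduct hL _)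
      (memLp_dotProduct hg.memLp _)]
  congr 1
  funext p
  exact dotProduct_add _ _ _

end Prediction

section Lifting

variable {H : Vec d → Vec K} {Gam : Matrix (Fin K) (Fin K) ℝ} {ν : Measure (Vec d)}

lemma measurable_prodMk_add (hH : Measurable H) :
    Measurable fun p : Vec d × Vec K => (p.1, H p.1 + p.2) := by fun_prop

lemma memLp_fst_eval_Qop (hH : Measurable H) (hg : IsCentered (gauss 0 Gam) Gam)
    (hν : ∀ i, MemLp (fun u => u i) 2 ν) (i : Fin d) :
    MemLp (fun p : Vec d × Vec K => p.1 i) 2 (Qop H Gam ν) := by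
  have := hg.isProbabilityMeasure
  refine (memLp_map_measure_iff (Measurable.aestronglyMeasurable (by fun_prop))
    (measurable_prodMk_add hH).aemeasurable).mpr ?_
  exact (hν i).comp_fst _

variable [IsProbabilityMeasure ν]

lemma isProbabilityMeasure_Qop (hH : Measurable H) (hg : IsCentered (gauss 0 Gam) Gam) :
    IsProbabilityMeasure (Qop H Gam ν) :=
  have := hg.isProbabilityMeasure
  Measure.isProbabilityMeasure_map (measurable_prodMk_add hH).aemeasurable

lemma memLp_snd_eval_Qop (hH : Measurable H) (hg : IsCentered (gauss 0 Gam) Gam)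
    (hL : ∀ j, MemLp (fun u => H u j) 2 ν) (j : Fin K) :
    MemLp (fun p : Vec d × Vec K => p.2 j) 2 (Qop H Gam ν) := by
  have := hg.isProbabilityMeasure
  refine (memLp_map_measure_iff (Measurable.aestronglyMeasurable (by fun_prop))
    (measurable_prodMk_add hH).aemeasurable).mpr ?_
  exact ((hL j).comp_fst _).add ((hg.memLp j).comp_snd ν)

lemma meanU_Qop (hH : Measurable H) (hg : IsCentered (gauss 0 Gam) Gam) (i : Fin d) :
    meanU (Qop H Gam ν) i = ∫ u, u i ∂ν := by
  have := hg.isProbabilityMeasure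
  rw [meanU, Qop, integral_map (measurable_prodMk_add hH).aemeasurable
    (Measurable.aestronglyMeasurable (by fun_prop)), integral_fun_fst (fun u : Vec d => u i)]
  simp

lemma meanY_Qop (hH : Measurable H) (hg : IsCentered (gauss 0 Gam) Gam)
    (hL : ∀ j, MemLp (fun u => H u j) 2 ν) (j : Fin K) :
    meanY (Qop H Gam ν) j = ∫ u, H u j ∂ν := by
  have := hg.isProbabilityMeasure
  rw [meanY, Qop, integral_map (measurable_prodMk_add hH).aemeasurable
    (Measurable.aestronglyMeasurable (by fun_prop))]
  simp only [Pi.add_apply]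
  rw [integral_add (((hL j).comp_fst _).integrable one_le_two)
    (((hg.memLp j).comp_snd ν).integrable one_le_two), integral_fun_fst (fun u => H u j),
    integral_fun_snd (fun x : Vec K => x j)]
  simp [hg.integral_eval]

lemma variance_Qop (hH : Measurable H) (hg : IsCentered (gauss 0 Gam) Gam)
    (hν : ∀ i, MemLp (fun u => u i) 2 ν) (hL : ∀ j, MemLp (fun u => H u j) 2 ν)
    (a : Vec d) (b : Vec K) :
    Var[fun p => a ⬝ᵥ p.1 + b ⬝ᵥ p.2; Qop H Gam ν] =
      Var[fun u => a ⬝ᵥ u + b ⬝ᵥ H u; ν] + b ⬝ᵥ (Gam *ᵥ b) := by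
  have := hg.isProbabilityMeasure
  rw [Qop, variance_map (by fun_prop) (measurable_prodMk_add hH).aemeasurable,
    ← hg.variance_dotProduct, ← variance_add_prod (X := fun u => a ⬝ᵥ u + b ⬝ᵥ H u)
      ((memLp_dotProduct hν a).add (memLp_dotProduct hL b)) (memLp_dotProduct hg.memLp b)]
  congr 1
  funext p
  simp [dotProduct_add, add_assoc]

end Lifting

lemma mul_add_mul_le_of_sq_le {κ γ x y c s : ℝ} (hγ : 0 < γ) (hx : 0 ≤ x) (hy : 0 ≤ y)
    (hs : 0 ≤ s) (hc : c ^ 2 ≤ x * y) (hys : y ≤ κ ^ 2 * s) :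
    γ / (2 * κ ^ 2 + γ) * x + γ / 2 * s ≤ x + 2 * c + y + γ * s := by
  have hD : 0 < 2 * κ ^ 2 + γ := by positivity
  set p := 2 * κ ^ 2 / (2 * κ ^ 2 + γ) * x with hp
  set q := y + γ / 2 * s with hq
  have hp0 : 0 ≤ p := by positivity
  have hq0 : 0 ≤ q := by positivity
  have hsplit : γ / (2 * κ ^ 2 + γ) * x = x - p := by
    rw [hp]
    field_simp
    ring
  have hpq : c ^ 2 ≤ p * q := by
    refine hc.trans ?_
    have h : p * q = x * (2 * κ ^ 2 * q) / (2 * κ ^ 2 + γ) := by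
      rw [hp]
      ring
    rw [h, le_div_iff₀ hD, mul_assoc]
    refine mul_le_mul_of_nonneg_left ?_ hx
    rw [hq]
    nlinarith
  have habs : |2 * c| ≤ p + q :=
    abs_le_of_sq_le_sq (by nlinarith [sq_nonneg (p - q)]) (by positivity)
  rw [hsplit]
  linarith [(abs_le.mp habs).1]

end Auxiliary

/-- **Moment bounds for the lifted predicted measure** (Lemma A.2). -/
theorem moment_bounds_QP
    (d K : ℕ) (κΨ κH σ γ : ℝ) (hσ : 0 < σ) (hγ : 0 < γ)
    (Psi : Vec d → Vec d) (H : Vec d → Vec K)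
    (hPsim : Measurable Psi) (hHm : Measurable H)
    (hPsib : ∀ v, enorm (Psi v) ≤ κΨ) (hHb : ∀ v, enorm (H v) ≤ κH)
    (Sig : Matrix (Fin d) (Fin d) ℝ) (Gam : Matrix (Fin K) (Fin K) ℝ)
    (hSig : loe (σ • 1) Sig) (hGam : loe (γ • 1) Gam)
    (μ : Measure (Vec d)) (hμ : IsProbabilityMeasure μ) :
    enorm (Sum.elim (meanU (Qop H Gam (Pop Psi Sig μ))) (meanY (Qop H Gam (Pop Psi Sig μ))))
        ≤ Real.sqrt (κΨ ^ 2 + κH ^ 2) ∧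
    loe (min (γ * σ / (2 * κH ^ 2 + γ)) (γ / 2) • 1)
      (covBlock (Qop H Gam (Pop Psi Sig μ))) ∧
    loe (covBlock (Qop H Gam (Pop Psi Sig μ)))
      (Matrix.fromBlocks ((2 * κΨ ^ 2) • 1 + (2 : ℝ) • Sig) 0 0 ((2 * κH ^ 2) • 1 + Gam)) := by
  have hg₁ := isCentered_gauss hσ hSig
  have hg₂ := isCentered_gauss hγ hGam
  have hPsiL (i : Fin d) : MemLp (fun v => Psi v i) 2 μ := memLp_eval_of_enorm_le hPsim hPsib i
  set ν := Pop Psi Sig μ with hν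
  have : IsProbabilityMeasure ν := isProbabilityMeasure_Pop hPsim hg₁
  have hνL (i : Fin d) : MemLp (fun u => u i) 2 ν := memLp_eval_Pop hPsim hg₁ hPsiL i
  have hHL (j : Fin K) : MemLp (fun u => H u j) 2 ν := memLp_eval_of_enorm_le hHm hHb j
  have : IsProbabilityMeasure (Qop H Gam ν) := isProbabilityMeasure_Qop hHm hg₂
  have hquad (w : Fin d ⊕ Fin K → ℝ) := (dotProduct_covBlock_mulVec
    (memLp_fst_eval_Qop hHm hg₂ hνL) (memLp_snd_eval_Qop hHm hg₂ hHL) w).trans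
      (variance_Qop hHm hg₂ hνL hHL (w ∘ Sum.inl) (w ∘ Sum.inr))
  have hvar (a : Vec d) (b : Vec K) :=
    ProbabilityTheory.variance_fun_add (memLp_dotProduct hνL a) (memLp_dotProduct hHL b)
  have hcov (a : Vec d) (b : Vec K) :=
    sq_covariance_le (memLp_dotProduct hνL a) (memLp_dotProduct hHL b)
  have hvarU (a : Vec d) := variance_dotProduct_Pop (μ := μ) hPsim hg₁ hPsiL a
  have hvarPsi (a : Vec d) := variance_dotProduct_le (ρ := μ) hPsim hPsib a
  have hvarH (b : Vec K) := variance_dotProduct_le (ρ := ν) hHm hHb b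
  have hvarU0 (a : Vec d) := ProbabilityTheory.variance_nonneg (fun u => a ⬝ᵥ u) ν
  have hvarPsi0 (a : Vec d) := ProbabilityTheory.variance_nonneg (fun v => a ⬝ᵥ Psi v) μ
  have hvarH0 (b : Vec K) := ProbabilityTheory.variance_nonneg (fun u => b ⬝ᵥ H u) ν
  have hsq {n : ℕ} (b : Vec n) : 0 ≤ b ⬝ᵥ b := Finset.sum_nonneg fun i _ => mul_self_nonneg (b i)
  rw [← hν] at hvarU
  refine ⟨?_, loe_of_dotProduct_mulVec_le (by simp [Matrix.IsSymm]) isSymm_covBlock fun w => ?_,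
    loe_of_dotProduct_mulVec_le isSymm_covBlock ?_ fun w => ?_⟩
  · refine Real.sqrt_le_sqrt ?_
    simp only [Fintype.sum_sum_type, Sum.elim_inl, Sum.elim_inr, meanU_Qop hHm hg₂,
      meanY_Qop hHm hg₂ hHL]
    simp only [hν, integral_eval_Pop hPsim hg₁ hPsiL]
    exact add_le_add (sum_sq_integral_le hPsim hPsib) (sum_sq_integral_le hHm hHb)
  · have hw : w ⬝ᵥ w =
        (w ∘ Sum.inl) ⬝ᵥ (w ∘ Sum.inl) + (w ∘ Sum.inr) ⬝ᵥ (w ∘ Sum.inr) := by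
      simp [dotProduct]
    rw [hquad, hvar, Matrix.smul_mulVec, Matrix.one_mulVec, dotProduct_smul, smul_eq_mul, hw]
    set a := w ∘ Sum.inl
    set b := w ∘ Sum.inr
    have hS : σ * (a ⬝ᵥ a) ≤ a ⬝ᵥ (Sig *ᵥ a) := by
      simpa [Matrix.smul_mulVec] using hSig.dotProduct_mulVec_le a
    have hG : γ * (b ⬝ᵥ b) ≤ b ⬝ᵥ (Gam *ᵥ b) := by
      simpa [Matrix.smul_mulVec] using hGam.dotProduct_mulVec_le b
    have hkey := mul_add_mul_le_of_sq_le hγ (hvarU0 a) (hvarH0 b) (hsq b) (hcov a b) (hvarH b)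
    have hU : σ * (a ⬝ᵥ a) ≤ ProbabilityTheory.variance (fun u => a ⬝ᵥ u) ν := by
      linarith [hvarU a, hvarPsi0 a]
    have h1 : min (γ * σ / (2 * κH ^ 2 + γ)) (γ / 2) * (a ⬝ᵥ a) ≤
        γ / (2 * κH ^ 2 + γ) * ProbabilityTheory.variance (fun u => a ⬝ᵥ u) ν := by
      calc _ ≤ γ * σ / (2 * κH ^ 2 + γ) * (a ⬝ᵥ a) :=
            mul_le_mul_of_nonneg_right (min_le_left _ _) (hsq a)
        _ = γ / (2 * κH ^ 2 + γ) * (σ * (a ⬝ᵥ a)) := by ring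
        _ ≤ _ := mul_le_mul_of_nonneg_left hU (by positivity)
    have h2 : min (γ * σ / (2 * κH ^ 2 + γ)) (γ / 2) * (b ⬝ᵥ b) ≤ γ / 2 * (b ⬝ᵥ b) :=
      mul_le_mul_of_nonneg_right (min_le_right _ _) (hsq b)
    linarith
  · refine Matrix.IsSymm.fromBlocks ?_ (by simp) ?_
    · simp [Matrix.IsSymm, hSig.isSymm_right.eq]
    · simp [Matrix.IsSymm, hGam.isSymm_right.eq]
  · have hw : w = Sum.elim (w ∘ Sum.inl) (w ∘ Sum.inr) := (Sum.elim_comp_inl_inr w).symm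
    rw [hquad, hvar]
    conv_rhs => rw [hw]
    rw [Matrix.fromBlocks_mulVec]
    set a := w ∘ Sum.inl
    set b := w ∘ Sum.inr
    have hsub := ProbabilityTheory.variance_nonneg (fun u => a ⬝ᵥ u - b ⬝ᵥ H u) ν
    rw [ProbabilityTheory.variance_fun_sub (memLp_dotProduct hνL a) (memLp_dotProduct hHL b)]
      at hsub
    simp only [Sum.elim_comp_inl, Sum.elim_comp_inr, Matrix.zero_mulVec, add_zero, zero_add,
      Matrix.add_mulVec, Matrix.smul_mulVec, Matrix.one_mulVec, sumElim_dotProduct_sumElim,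
      dotProduct_add, dotProduct_smul, smul_eq_mul]
    linarith [hvarU a, hvarPsi a, hvarH b]

end EnKF
end
end

section
/- The weighted total variation metric controls differences of first and second moments: for probability measures μ₁, μ₂ on R^n with finite second moments, |M(μ₁) − M(μ₂)| ≤ ½ d_g(μ₁, μ₂) and ‖C(μ₁) − C(μ₂)‖ ≤ (1 + ½|M(μ₁) + M(μ₂)|) d_g(μ₁, μ₂), where ‖·‖ is the operator (spectral) norm. -/
open MeasureTheory Matrix
open scoped BigOperators ENNReal

noncomputable section

namespace EnKF

variable {d K : ℕ}

theorem abs_dotProduct_le_enorm_mul_enorm {ι : Type*} [Fintype ι] (x y : ι → ℝ) :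
    |x ⬝ᵥ y| ≤ enorm x * enorm y := by
  unfold enorm dotProduct
  rw [← Real.sqrt_mul (Finset.sum_nonneg fun _ _ => sq_nonneg _)]
  exact Real.abs_le_sqrt (Finset.sum_mul_sq_le_sq_mul_sq _ _ _)

theorem enorm_nonneg {ι : Type*} [Fintype ι] (x : ι → ℝ) : 0 ≤ enorm x := Real.sqrt_nonneg _

theorem enorm_sq {ι : Type*} [Fintype ι] (x : ι → ℝ) : enorm x ^ 2 = ∑ i, x i ^ 2 :=
  Real.sq_sqrt (Finset.sum_nonneg fun _ _ => sq_nonneg _)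

theorem abs_dotProduct_le_enorm {ι : Type*} [Fintype ι] {b : ι → ℝ} (hb : enorm b ≤ 1)
    (x : ι → ℝ) : |b ⬝ᵥ x| ≤ enorm x :=
  (abs_dotProduct_le_enorm_mul_enorm b x).trans (mul_le_of_le_one_left (enorm_nonneg x) hb)

/-- Dual characterization of the Euclidean norm. -/
theorem enorm_le_of_forall_dotProduct_le {ι : Type*} [Fintype ι] {w : ι → ℝ} {c : ℝ}
    (h : ∀ b : ι → ℝ, enorm b ≤ 1 → b ⬝ᵥ w ≤ c) : enorm w ≤ c := by
  have hw : w ⬝ᵥ w = enorm w ^ 2 := by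
    rw [enorm_sq]; exact Finset.sum_congr rfl fun i _ => (sq (w i)).symm
  rcases (enorm_nonneg w).eq_or_lt with h0 | h0
  · rw [← h0]
    simpa using h 0 (by simp [enorm])
  · have hb : enorm ((enorm w)⁻¹ • w) ≤ 1 := by
      have : enorm ((enorm w)⁻¹ • w) ^ 2 = 1 := by
        rw [enorm_sq]
        simp only [Pi.smul_apply, smul_eq_mul, mul_pow, ← Finset.mul_sum, ← enorm_sq w]
        field_simp
      nlinarith [enorm_nonneg ((enorm w)⁻¹ • w)]
    have := h _ hb
    rw [smul_dotProduct, hw, smul_eq_mul] at this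
    field_simp at this
    exact this

theorem abs_integral_sub_le_dG {E : Type*} [MeasurableSpace E] {G : E → ℝ} {μ₁ μ₂ : Measure E}
    (h₁ : Integrable G μ₁) (h₂ : Integrable G μ₂) {f : E → ℝ} (hf : Measurable f)
    (hfG : ∀ v, |f v| ≤ G v) : |(∫ v, f v ∂μ₁) - ∫ v, f v ∂μ₂| ≤ dG G μ₁ μ₂ := by
  refine le_ciSup (f := fun f : {f : E → ℝ // Measurable f ∧ ∀ v, |f v| ≤ G v} =>
    |(∫ v, f.1 v ∂μ₁) - ∫ v, f.1 v ∂μ₂|) ⟨(∫ v, G v ∂μ₁) + ∫ v, G v ∂μ₂, ?_⟩ ⟨f, hf, hfG⟩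
  rintro _ ⟨⟨f, -, hfG⟩, rfl⟩
  exact (abs_sub _ _).trans (add_le_add
    (norm_integral_le_of_norm_le (f := f) h₁ (.of_forall hfG))
    (norm_integral_le_of_norm_le (f := f) h₂ (.of_forall hfG)))

section Moments

variable {n : ℕ} {μ : Measure (Vec n)}

theorem integrable_coord_mul_coord (h : Integrable (fun v : Vec n => ∑ i, v i ^ 2) μ)
    (i j : Fin n) : Integrable (fun v : Vec n => v i * v j) μ := by
  refine h.mono' (by fun_prop) (.of_forall fun v => ?_)
  have hi := Finset.single_le_sum (fun k _ => sq_nonneg (v k)) (Finset.mem_univ i)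
  have hj := Finset.single_le_sum (fun k _ => sq_nonneg (v k)) (Finset.mem_univ j)
  rw [Real.norm_eq_abs, abs_le]
  constructor <;> nlinarith [sq_nonneg (v i + v j), sq_nonneg (v i - v j)]

variable [IsProbabilityMeasure μ]

theorem integrable_gw (h : Integrable (fun v : Vec n => ∑ i, v i ^ 2) μ) :
    Integrable (gw : Vec n → ℝ) μ :=
  (integrable_const 1).add h

theorem integrable_coord (h : Integrable (fun v : Vec n => ∑ i, v i ^ 2) μ) (i : Fin n) :
    Integrable (fun v : Vec n => v i) μ := by
  refine (integrable_gw h).mono' (measurable_pi_apply i).aestronglyMeasurable (.of_forall fun v => ?_)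
  have hi := Finset.single_le_sum (fun k _ => sq_nonneg (v k)) (Finset.mem_univ i)
  rw [Real.norm_eq_abs, abs_le, gw]
  constructor <;> nlinarith [sq_nonneg (v i + 1), sq_nonneg (v i - 1)]

theorem integral_dotProduct (h : Integrable (fun v : Vec n => ∑ i, v i ^ 2) μ) (b : Vec n) :
    ∫ v, b ⬝ᵥ v ∂μ = b ⬝ᵥ mean μ := by
  simp only [dotProduct, mean]
  rw [integral_finsetSum _ fun i _ => (integrable_coord h i).const_mul _]
  simp only [integral_const_mul]

theorem cov_apply (h : Integrable (fun v : Vec n => ∑ i, v i ^ 2) μ) (i j : Fin n) :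
    cov μ i j = (∫ v, v i * v j ∂μ) - mean μ i * mean μ j := by
  have hij := integrable_coord_mul_coord h i j
  have hi := (integrable_coord h i).mul_const (mean μ j)
  have hj := (integrable_coord h j).const_mul (mean μ i)
  have hsplit : ∀ v : Vec n, (v i - mean μ i) * (v j - mean μ j)
      = v i * v j - v i * mean μ j - mean μ i * v j + mean μ i * mean μ j := fun v => by ring
  have hmi : ∫ v, v i ∂μ = mean μ i := rfl
  have hmj : ∫ v, v j ∂μ = mean μ j := rfl
  simp only [cov, Matrix.of_apply, hsplit]
  rw [integral_add (by fun_prop) (integrable_const _), integral_sub (by fun_prop) hj,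
    integral_sub hij hi, integral_mul_const, integral_const_mul, hmi, hmj]
  simp

theorem dotProduct_cov_mulVec (h : Integrable (fun v : Vec n => ∑ i, v i ^ 2) μ) (a b : Vec n) :
    b ⬝ᵥ (cov μ *ᵥ a)
      = (∫ v, (b ⬝ᵥ v) * (a ⬝ᵥ v) ∂μ) - (b ⬝ᵥ mean μ) * (a ⬝ᵥ mean μ) := by
  have hexp : ∀ v : Vec n, (b ⬝ᵥ v) * (a ⬝ᵥ v) = ∑ i, ∑ j, b i * a j * (v i * v j) := fun v => by
    simp only [dotProduct, Finset.sum_mul_sum]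
    exact Finset.sum_congr rfl fun i _ => Finset.sum_congr rfl fun j _ => by ring
  have hint : ∀ i j, Integrable (fun v : Vec n => b i * a j * (v i * v j)) μ :=
    fun i j => (integrable_coord_mul_coord h i j).const_mul _
  rw [hexp (mean μ)]
  simp only [hexp]
  rw [integral_finsetSum _ fun i _ => integrable_finsetSum _ fun j _ => hint i j,
    ← Finset.sum_sub_distrib]
  simp only [dotProduct, mulVec, Finset.mul_sum]
  refine Finset.sum_congr rfl fun i _ => ?_
  rw [integral_finsetSum _ fun j _ => hint i j, ← Finset.sum_sub_distrib]
  refine Finset.sum_congr rfl fun j _ => ?_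
  rw [integral_const_mul, cov_apply h]
  ring

end Moments

/-- **The weighted TV metric controls first and second moments** (Lemma A.3). -/
theorem moment_bound_dG
    (n : ℕ) (μ₁ μ₂ : Measure (Vec n))
    (hμ₁ : IsProbabilityMeasure μ₁) (hμ₂ : IsProbabilityMeasure μ₂)
    (h₁ : Integrable (fun v : Vec n => ∑ i, v i ^ 2) μ₁)
    (h₂ : Integrable (fun v : Vec n => ∑ i, v i ^ 2) μ₂) :
    enorm (mean μ₁ - mean μ₂) ≤ (1 / 2) * dG gw μ₁ μ₂ ∧
    opNorm (cov μ₁ - cov μ₂) ≤ (1 + (1 / 2) * enorm (mean μ₁ + mean μ₂)) * dG gw μ₁ μ₂ := by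
  have hg₁ := integrable_gw h₁
  have hg₂ := integrable_gw h₂
  have hmean : enorm (mean μ₁ - mean μ₂) ≤ (1 / 2) * dG gw μ₁ μ₂ := by
    refine enorm_le_of_forall_dotProduct_le fun b hb => ?_
    have hle := abs_integral_sub_le_dG hg₁ hg₂ (f := fun v => 2 * (b ⬝ᵥ v))
      (by unfold dotProduct; fun_prop) fun v => by
        rw [gw, ← enorm_sq, abs_mul, abs_two]
        nlinarith [abs_dotProduct_le_enorm hb v, sq_nonneg (enorm v - 1)]
    rw [integral_const_mul, integral_const_mul, integral_dotProduct h₁,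
      integral_dotProduct h₂] at hle
    rw [dotProduct_sub]
    linarith [le_abs_self (2 * (b ⬝ᵥ mean μ₁) - 2 * (b ⬝ᵥ mean μ₂))]
  refine ⟨hmean, ?_⟩
  have : Nonempty {x : Fin n → ℝ // ∑ i, x i ^ 2 ≤ 1} := ⟨⟨0, by simp⟩⟩
  refine ciSup_le fun ⟨a, ha⟩ => enorm_le_of_forall_dotProduct_le fun b hb => ?_
  replace ha : enorm a ≤ 1 := Real.sqrt_le_one.mpr ha
  have hle := abs_integral_sub_le_dG hg₁ hg₂ (f := fun v => (b ⬝ᵥ v) * (a ⬝ᵥ v))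
    (by unfold dotProduct; fun_prop) fun v => by
      rw [gw, ← enorm_sq, abs_mul]
      nlinarith [mul_le_mul (abs_dotProduct_le_enorm hb v) (abs_dotProduct_le_enorm ha v)
        (abs_nonneg _) (enorm_nonneg v)]
  have hcross : ∀ x y : Vec n, enorm x ≤ 1 → enorm y ≤ 1 →
      -((x ⬝ᵥ (mean μ₁ - mean μ₂)) * (y ⬝ᵥ (mean μ₁ + mean μ₂)))
        ≤ (1 / 2) * dG gw μ₁ μ₂ * enorm (mean μ₁ + mean μ₂) := fun x y hx hy => by
    refine (neg_le_abs _).trans ?_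
    rw [abs_mul]
    exact mul_le_mul ((abs_dotProduct_le_enorm hx _).trans hmean) (abs_dotProduct_le_enorm hy _)
      (abs_nonneg _) ((enorm_nonneg _).trans hmean)
  have hba := hcross b a hb ha
  have hab := hcross a b ha hb
  simp only [dotProduct_sub, dotProduct_add] at hba hab
  rw [sub_mulVec, dotProduct_sub, dotProduct_cov_mulVec h₁, dotProduct_cov_mulVec h₂]
  linarith [le_of_abs_le hle]

end EnKF
end
end

section
/- The lifting operator Q is globally Lipschitz in the weighted total variation metric: if ‖H‖_∞ ≤ κ_H and Γ is symmetric positive definite, then for all probability measures μ, ν on R^d, d_g(Qμ, Qν) ≤ (1 + κ_H² + tr(Γ)) d_g(μ, ν), where on the left d_g is the weighted total variation metric on P(R^d × R^K) with weight g(u, y) = 1 + |u|² + |y|². -/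
open MeasureTheory Matrix
open scoped BigOperators ENNReal

noncomputable section

namespace EnKF

variable {d K : ℕ}

open ProbabilityTheory

/-- The product of standard Gaussian laws has the product of their densities. -/
lemma pi_gaussianReal_eq_withDensity (n : ℕ) :
    Measure.pi (fun _ : Fin n => gaussianReal 0 1) =
      (volume : Measure (Vec n)).withDensity
        fun x => ENNReal.ofReal (∏ i, gaussianPDFReal 0 1 (x i)) := by
  refine Measure.pi_eq fun s hs => ?_
  rw [withDensity_apply _ (MeasurableSet.univ_pi hs), volume_pi, Measure.restrict_pi_pi,
    ← ofReal_integral_eq_lintegral_ofReal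
      (Integrable.fintype_prod fun i => (integrable_gaussianPDFReal 0 1).restrict)
      (ae_of_all _ fun x => Finset.prod_nonneg fun i _ => gaussianPDFReal_nonneg 0 1 _),
    integral_fintype_prod_eq_prod (fun _ => gaussianPDFReal 0 1),
    ENNReal.ofReal_prod_of_nonneg
      fun i _ => integral_nonneg fun x => gaussianPDFReal_nonneg 0 1 x]
  exact Finset.prod_congr rfl fun i _ =>
    (gaussianReal_apply_eq_integral 0 one_ne_zero (s i)).symm

lemma prod_gaussianPDFReal {n : ℕ} (x : Vec n) :
    ∏ i, gaussianPDFReal 0 1 (x i) =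
      (Real.sqrt ((2 * Real.pi) ^ n))⁻¹ * Real.exp (-(1 / 2) * (x ⬝ᵥ x)) := by
  have h : Real.sqrt ((2 * Real.pi) ^ n) = Real.sqrt (2 * Real.pi) ^ n := by
    rw [← Real.sqrt_sq (pow_nonneg (Real.sqrt_nonneg (2 * Real.pi)) n), ← pow_mul, mul_comm n 2,
      pow_mul, Real.sq_sqrt (by positivity)]
  simp only [gaussianPDFReal, NNReal.coe_one, mul_one, sub_zero, Finset.prod_mul_distrib,
    Finset.prod_const, Finset.card_univ, Fintype.card_fin, ← Real.exp_sum, h, inv_pow]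
  congr 2
  rw [dotProduct, Finset.mul_sum]
  exact Finset.sum_congr rfl fun i _ => by ring

lemma measurable_gaussDensity {n : ℕ} (m : Vec n) (S : Matrix (Fin n) (Fin n) ℝ) :
    Measurable (gaussDensity m S) := by
  unfold gaussDensity dotProduct mulVec dotProduct
  fun_prop

/-- A symmetric square root of `S` transports the standard Gaussian density to that of `N(0, S)`. -/
lemma abs_det_mul_gaussDensity_mulVec {n : ℕ} {A : Matrix (Fin n) (Fin n) ℝ} (hA : Aᵀ = A)
    (hdet : A.det ≠ 0) (x : Vec n) :
    |A.det| * gaussDensity 0 (A * A) (A *ᵥ x) = ∏ i, gaussianPDFReal 0 1 (x i) := by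
  have hu : IsUnit A.det := isUnit_iff_ne_zero.2 hdet
  have hq : (A *ᵥ x) ⬝ᵥ ((A * A)⁻¹ *ᵥ (A *ᵥ x)) = x ⬝ᵥ x := by
    rw [mulVec_mulVec, Matrix.mul_inv_rev, Matrix.mul_assoc, nonsing_inv_mul A hu, Matrix.mul_one,
      dotProduct_comm, dotProduct_mulVec, vecMul_mulVec, transpose_nonsing_inv, hA,
      nonsing_inv_mul A hu, vecMul_one]
  rw [prod_gaussianPDFReal, gaussDensity, sub_zero, hq, det_mul, Real.sqrt_mul (by positivity),
    Real.sqrt_mul_self_eq_abs, mul_inv]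
  have := abs_ne_zero.2 hdet
  field_simp

open scoped MatrixOrder in
lemma gauss_eq_map_pi {n : ℕ} {S : Matrix (Fin n) (Fin n) ℝ} (hS : S.PosDef) :
    gauss 0 S = (Measure.pi fun _ : Fin n => gaussianReal 0 1).map (CFC.sqrt S *ᵥ ·) := by
  set A := CFC.sqrt S
  have hAA : A * A = S := CFC.sqrt_mul_sqrt_self S hS.posSemidef.nonneg
  have hAt : Aᵀ = A := by
    have h := (CFC.sqrt_nonneg S).isSelfAdjoint
    rwa [isSelfAdjoint_iff, star_eq_conjTranspose, conjTranspose_eq_transpose_of_trivial] at h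
  have hdet : A.det ≠ 0 := fun h => hS.det_pos.ne' (by rw [← hAA, det_mul, h, mul_zero])
  have hm : Measurable (A *ᵥ · : Vec n → Vec n) := by
    unfold mulVec dotProduct; fun_prop
  have hvol : (volume : Measure (Vec n)) =
      ENNReal.ofReal |A.det| • (volume : Measure (Vec n)).map (A *ᵥ ·) := by
    have h := Real.map_matrix_volume_pi_eq_smul_volume_pi hdet
    have h' : (⇑(toLin' A) : Vec n → Vec n) = (A *ᵥ ·) := by ext; simp
    rw [h'] at h
    rw [h, smul_smul, ← ENNReal.ofReal_mul (abs_nonneg _), ← abs_mul, mul_inv_cancel₀ hdet]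
    simp
  rw [pi_gaussianReal_eq_withDensity]
  ext s hs
  rw [Measure.map_apply hm hs, withDensity_apply _ (hm hs), gauss, withDensity_apply _ hs]
  conv_lhs => rw [hvol]
  have hmeas : Measurable fun x => ENNReal.ofReal (gaussDensity 0 S x) :=
    (measurable_gaussDensity 0 S).ennreal_ofReal
  have hmeas_comp : Measurable fun x => ENNReal.ofReal (gaussDensity 0 S (A *ᵥ x)) :=
    hmeas.comp hm
  rw [Measure.restrict_smul, lintegral_smul_measure, smul_eq_mul, setLIntegral_map hs hmeas hm,
    ← lintegral_const_mul _ hmeas_comp]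
  refine lintegral_congr fun x => ?_
  rw [← ENNReal.ofReal_mul (abs_nonneg _), ← hAA, abs_det_mul_gaussDensity_mulVec hAt hdet]

lemma gauss_eq_map_multivariateGaussian {n : ℕ} {S : Matrix (Fin n) (Fin n) ℝ} (hS : S.PosDef) :
    gauss 0 S = (multivariateGaussian 0 S).map WithLp.ofLp := by
  rw [multivariateGaussian, ← map_pi_eq_stdGaussian, Measure.map_map (by fun_prop) (by fun_prop),
    Measure.map_map (by fun_prop) (by fun_prop), gauss_eq_map_pi hS]
  congr 1
  ext x i
  simp

lemma isProbabilityMeasure_gauss {n : ℕ} {S : Matrix (Fin n) (Fin n) ℝ} (hS : S.PosDef) :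
    IsProbabilityMeasure (gauss 0 S) := by
  rw [gauss_eq_map_multivariateGaussian hS]
  exact Measure.isProbabilityMeasure_map (by fun_prop)

lemma measurePreserving_eval_gauss {n : ℕ} {S : Matrix (Fin n) (Fin n) ℝ} (hS : S.PosDef)
    (i : Fin n) :
    MeasurePreserving (fun x : Vec n => x i) (gauss 0 S) (gaussianReal 0 (S i i).toNNReal) := by
  refine ⟨measurable_pi_apply i, ?_⟩
  rw [gauss_eq_map_multivariateGaussian hS, Measure.map_map (by fun_prop) (by fun_prop)]
  exact (measurePreserving_eval_multivariateGaussian (μ := 0) hS.posSemidef (i := i)).map_eq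

lemma memLp_eval_gauss {n : ℕ} {S : Matrix (Fin n) (Fin n) ℝ} (hS : S.PosDef) (i : Fin n) :
    MemLp (fun x : Vec n => x i) 2 (gauss 0 S) :=
  (memLp_id_gaussianReal 2).comp_measurePreserving (measurePreserving_eval_gauss hS i)

lemma integral_eval_gauss {n : ℕ} {S : Matrix (Fin n) (Fin n) ℝ} (hS : S.PosDef) (i : Fin n) :
    ∫ x, x i ∂gauss 0 S = 0 := by
  have h := measurePreserving_eval_gauss hS i
  rw [← integral_map (f := fun y : ℝ => y) h.aemeasurable (by fun_prop), h.map_eq,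
    integral_id_gaussianReal]

lemma integral_eval_sq_gauss {n : ℕ} {S : Matrix (Fin n) (Fin n) ℝ} (hS : S.PosDef)
    (i : Fin n) : ∫ x, x i ^ 2 ∂gauss 0 S = S i i := by
  have h := measurePreserving_eval_gauss hS i
  have hv : Var[fun x => x; gaussianReal 0 (S i i).toNNReal] = S i i := by
    rw [variance_fun_id_gaussianReal, Real.coe_toNNReal _ hS.posSemidef.diag_nonneg]
  rw [← integral_map (f := fun y : ℝ => y ^ 2) h.aemeasurable (by fun_prop), h.map_eq,
    ← variance_of_integral_eq_zero (X := fun y : ℝ => y) (by fun_prop) integral_id_gaussianReal, hv]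

lemma integrable_sum_add_sq_gauss {n : ℕ} {S : Matrix (Fin n) (Fin n) ℝ} (hS : S.PosDef)
    (m : Vec n) : Integrable (fun x : Vec n => ∑ i, (m i + x i) ^ 2) (gauss 0 S) := by
  have := isProbabilityMeasure_gauss hS
  exact integrable_finsetSum _ fun i _ =>
    ((memLp_const (m i)).add (memLp_eval_gauss hS i)).integrable_sq

lemma integral_sum_add_sq_gauss {n : ℕ} {S : Matrix (Fin n) (Fin n) ℝ} (hS : S.PosDef)
    (m : Vec n) : ∫ x, ∑ i, (m i + x i) ^ 2 ∂gauss 0 S = ∑ i, m i ^ 2 + S.trace := by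
  have := isProbabilityMeasure_gauss hS
  have h (i : Fin n) : Integrable (fun x : Vec n => (m i + x i) ^ 2) (gauss 0 S) :=
    ((memLp_const (m i)).add (memLp_eval_gauss hS i)).integrable_sq
  rw [integral_finsetSum _ fun i _ => h i, trace, ← Finset.sum_add_distrib]
  refine Finset.sum_congr rfl fun i _ => ?_
  have h1 : Integrable (fun x : Vec n => x i) (gauss 0 S) :=
    (memLp_eval_gauss hS i).integrable one_le_two
  have h2 : Integrable (fun x : Vec n => x i ^ 2) (gauss 0 S) :=
    (memLp_eval_gauss hS i).integrable_sq
  have h3 : Integrable (fun x : Vec n => m i ^ 2 + 2 * m i * x i) (gauss 0 S) :=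
    (integrable_const _).add (h1.const_mul _)
  simp_rw [add_sq]
  rw [integral_add h3 h2, integral_add (integrable_const _) (h1.const_mul _), integral_const_mul,
    integral_eval_gauss hS, integral_eval_sq_gauss hS]
  simp

section WeightedTotalVariation

variable {E : Type*} [MeasurableSpace E] {G : E → ℝ} {μ ν : Measure E}

/-- The values `|μ[f] - ν[f]|` whose supremum is `dG G μ ν`. -/
def testGap (G : E → ℝ) (μ ν : Measure E) (f : {f : E → ℝ // Measurable f ∧ ∀ v, |f v| ≤ G v}) :
    ℝ :=
  |(∫ v, f.1 v ∂μ) - ∫ v, f.1 v ∂ν|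

lemma abs_integral_sub_le_mul_dG (hb : BddAbove (Set.range (testGap G μ ν))) {C : ℝ} (hC : 0 < C)
    {f : E → ℝ} (hf : Measurable f) (hfG : ∀ v, |f v| ≤ C * G v) :
    |(∫ v, f v ∂μ) - ∫ v, f v ∂ν| ≤ C * dG G μ ν := by
  have h : testGap G μ ν ⟨fun v => C⁻¹ * f v, hf.const_mul _, fun v => ?_⟩ ≤ dG G μ ν :=
    le_ciSup hb _
  · simp only [testGap, integral_const_mul] at h
    rwa [← mul_sub, abs_mul, abs_of_pos (inv_pos.2 hC), inv_mul_le_iff₀ hC] at h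
  · rw [abs_mul, abs_of_pos (inv_pos.2 hC), inv_mul_le_iff₀ hC]
    exact hfG v

/-- If the weighted total variation between `μ` and `ν` is finite, then nonnegative functions
dominated by the weight are integrable for both measures or for neither. -/
lemma integrable_of_bddAbove_testGap [IsFiniteMeasure μ] [IsFiniteMeasure ν]
    (hb : BddAbove (Set.range (testGap G μ ν))) {C : ℝ} (hC : 0 < C)
    {h : E → ℝ} (hm : Measurable h) (h0 : ∀ v, 0 ≤ h v) (hG : ∀ v, h v ≤ C * G v)
    (hμ : Integrable h μ) : Integrable h ν := by
  have hmin (n : ℕ) (v : E) : 0 ≤ min (h v) n := le_min (h0 v) n.cast_nonneg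
  have hmm (n : ℕ) : Measurable fun v => min (h v) (n : ℝ) := hm.min measurable_const
  have hint (n : ℕ) (ρ : Measure E) [IsFiniteMeasure ρ] :
      Integrable (fun v => min (h v) (n : ℝ)) ρ :=
    Integrable.of_bound (hmm n).aestronglyMeasurable n <| ae_of_all _ fun v => by
      rw [Real.norm_of_nonneg (hmin n v)]; exact min_le_right _ _
  have hle (n : ℕ) : ∫ v, min (h v) n ∂ν ≤ ∫ v, h v ∂μ + C * dG G μ ν := by
    have h1 := abs_integral_sub_le_mul_dG hb hC (hmm n) fun v => by
      rw [abs_of_nonneg (hmin n v)]; exact (min_le_left _ _).trans (hG v)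
    have h2 : ∫ v, min (h v) n ∂μ ≤ ∫ v, h v ∂μ :=
      integral_mono (hint n μ) hμ fun v => min_le_left _ _
    linarith [(abs_le.1 h1).1]
  have hlim : Filter.Tendsto (fun n : ℕ => ∫⁻ v, ENNReal.ofReal (min (h v) n) ∂ν) Filter.atTop
      (nhds (∫⁻ v, ENNReal.ofReal (h v) ∂ν)) := by
    refine lintegral_tendsto_of_tendsto_of_monotone (fun n => (hmm n).ennreal_ofReal.aemeasurable)
      (ae_of_all _ fun v m n hmn => by dsimp only; gcongr) (ae_of_all _ fun v => ?_)
    refine tendsto_const_nhds.congr' ?_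
    filter_upwards [Filter.eventually_ge_atTop ⌈h v⌉₊] with n hn
    rw [min_eq_left (Nat.ceil_le.1 hn)]
  refine ⟨hm.aestronglyMeasurable, ?_⟩
  rw [hasFiniteIntegral_iff_ofReal (ae_of_all _ h0)]
  refine (le_of_tendsto' hlim fun n => ?_).trans_lt
    (ENNReal.ofReal_lt_top (r := ∫ v, h v ∂μ + C * dG G μ ν))
  rw [← ofReal_integral_eq_lintegral_ofReal (hint n ν) (ae_of_all _ (hmin n))]
  exact ENNReal.ofReal_le_ofReal (hle n)

end WeightedTotalVariation

section Lifting

variable {H : Vec d → Vec K} {Gam : Matrix (Fin K) (Fin K) ℝ} {F : Vec d × Vec K → ℝ}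

lemma measurable_lift (hHm : Measurable H) :
    Measurable fun p : Vec d × Vec K => (p.1, H p.1 + p.2) := by
  fun_prop

lemma map_fst_Qop (hHm : Measurable H) (hGam : Gam.PosDef) (μ : Measure (Vec d)) [SFinite μ] :
    (Qop H Gam μ).map Prod.fst = μ := by
  have := isProbabilityMeasure_gauss hGam
  rw [Qop, Measure.map_map measurable_fst (measurable_lift hHm)]
  change (μ.prod (gauss 0 Gam)).map Prod.fst = μ
  simp

lemma integrable_section (hHm : Measurable H) (hGam : Gam.PosDef) (hF : Measurable F)
    (hFg : ∀ p, |F p| ≤ gw2 p) (u : Vec d) :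
    Integrable (fun η => F (u, H u + η)) (gauss 0 Gam) := by
  have := isProbabilityMeasure_gauss hGam
  refine ((integrable_const (1 + ∑ i, u i ^ 2)).add
    (integrable_sum_add_sq_gauss hGam (H u))).mono' ?_ (ae_of_all _ fun η => hFg _)
  exact (hF.comp ((measurable_lift hHm).comp measurable_prodMk_left)).aestronglyMeasurable

lemma integral_abs_section_le (hHm : Measurable H) {κH : ℝ} (hHb : ∀ v, enorm (H v) ≤ κH)
    (hGam : Gam.PosDef) (hF : Measurable F) (hFg : ∀ p, |F p| ≤ gw2 p) (u : Vec d) :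
    ∫ η, |F (u, H u + η)| ∂gauss 0 Gam ≤ (1 + κH ^ 2 + Gam.trace) * gw u := by
  have := isProbabilityMeasure_gauss hGam
  have hi := integrable_sum_add_sq_gauss hGam (H u)
  have hle : ∫ η, |F (u, H u + η)| ∂gauss 0 Gam ≤
      ∫ η, ((1 + ∑ i, u i ^ 2) + ∑ j, (H u j + η j) ^ 2) ∂gauss 0 Gam :=
    integral_mono (integrable_section hHm hGam hF hFg u).abs ((integrable_const _).add hi)
      fun η => hFg _
  rw [integral_add (integrable_const _) hi, integral_sum_add_sq_gauss hGam] at hle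
  have hH : ∑ j, H u j ^ 2 ≤ κH ^ 2 :=
    (Real.sqrt_le_left ((Real.sqrt_nonneg _).trans (hHb u))).1 (hHb u)
  have htr : 0 ≤ Gam.trace := hGam.posSemidef.trace_nonneg
  have hu : 0 ≤ ∑ i, u i ^ 2 := Finset.sum_nonneg fun i _ => sq_nonneg _
  simp only [integral_const, probReal_univ, one_smul] at hle
  rw [gw]
  nlinarith [mul_nonneg (sq_nonneg κH) hu, mul_nonneg htr hu]

lemma integrable_Qop_iff (hHm : Measurable H) (hGam : Gam.PosDef) (hF : Measurable F)
    (hFg : ∀ p, |F p| ≤ gw2 p) (μ : Measure (Vec d)) [SFinite μ] :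
    Integrable F (Qop H Gam μ) ↔
      Integrable (fun u => ∫ η, |F (u, H u + η)| ∂gauss 0 Gam) μ := by
  have := isProbabilityMeasure_gauss hGam
  have hm := measurable_lift (K := K) hHm
  rw [Qop, integrable_map_measure hF.aestronglyMeasurable hm.aemeasurable,
    integrable_prod_iff (hF.comp hm).aestronglyMeasurable]
  exact and_iff_right (ae_of_all _ fun u => integrable_section hHm hGam hF hFg u)

lemma integral_Qop (hHm : Measurable H) (hGam : Gam.PosDef) {μ : Measure (Vec d)} [SFinite μ]
    (hF : Measurable F) (hFi : Integrable F (Qop H Gam μ)) :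
    ∫ p, F p ∂Qop H Gam μ = ∫ u, ∫ η, F (u, H u + η) ∂gauss 0 Gam ∂μ := by
  have := isProbabilityMeasure_gauss hGam
  have hm := measurable_lift (K := K) hHm
  rw [Qop, integrable_map_measure hF.aestronglyMeasurable hm.aemeasurable] at hFi
  rw [Qop, integral_map hm.aemeasurable hF.aestronglyMeasurable]
  exact integral_prod _ hFi

/-- Test functions on `ℝ^d` extend to test functions on `ℝ^d × ℝ^K` with the same gap. -/
lemma bddAbove_testGap_of_Qop (hHm : Measurable H) (hGam : Gam.PosDef) {μ ν : Measure (Vec d)}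
    [SFinite μ] [SFinite ν]
    (hb : BddAbove (Set.range (testGap gw2 (Qop H Gam μ) (Qop H Gam ν)))) :
    BddAbove (Set.range (testGap gw μ ν)) := by
  obtain ⟨B, hB⟩ := hb
  refine ⟨B, ?_⟩
  rintro _ ⟨⟨f, hf, hfg⟩, rfl⟩
  have hint (ρ : Measure (Vec d)) [SFinite ρ] : ∫ p, f p.1 ∂Qop H Gam ρ = ∫ u, f u ∂ρ := by
    conv_rhs => rw [← map_fst_Qop hHm hGam ρ]
    exact (integral_map measurable_fst.aemeasurable hf.aestronglyMeasurable).symm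
  have hle := hB ⟨⟨fun p => f p.1, hf.comp measurable_fst, fun p => (hfg p.1).trans
    (le_add_of_nonneg_right (Finset.sum_nonneg fun j _ => sq_nonneg _))⟩, rfl⟩
  simpa only [testGap, hint] using hle

end Lifting

/-- **The lifting operator `Q` is globally Lipschitz** (Lemma A.7):
`d_g(Qμ, Qν) ≤ (1 + κ_H² + tr Γ) d_g(μ, ν)`. -/
theorem Q_lipschitz
    (d K : ℕ) (κH : ℝ) (H : Vec d → Vec K) (hHm : Measurable H)
    (hHb : ∀ v, enorm (H v) ≤ κH)
    (Gam : Matrix (Fin K) (Fin K) ℝ) (hGam : Gam.PosDef)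
    (μ ν : Measure (Vec d)) (hμ : IsProbabilityMeasure μ) (hν : IsProbabilityMeasure ν) :
    dG gw2 (Qop H Gam μ) (Qop H Gam ν) ≤ (1 + κH ^ 2 + Gam.trace) * dG gw μ ν := by
  have := isProbabilityMeasure_gauss hGam
  have hC : 0 < 1 + κH ^ 2 + Gam.trace := by
    have htr : 0 ≤ Gam.trace := hGam.posSemidef.trace_nonneg
    positivity
  by_cases hb : BddAbove (Set.range (testGap gw μ ν))
  · have : Nonempty {f : Vec d × Vec K → ℝ // Measurable f ∧ ∀ p, |f p| ≤ gw2 p} :=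
      ⟨0, measurable_const, fun p => by simp only [Pi.zero_apply, abs_zero, gw2]; positivity⟩
    refine ciSup_le fun ⟨F, hF, hFg⟩ => ?_
    have hFm := hF.comp (measurable_lift (K := K) hHm)
    have habs : Measurable fun u => ∫ η, |F (u, H u + η)| ∂gauss 0 Gam :=
      (StronglyMeasurable.integral_prod_right' hFm.abs.stronglyMeasurable).measurable
    have hle := integral_abs_section_le hHm hHb hGam hF hFg
    have h0 (u : Vec d) : 0 ≤ ∫ η, |F (u, H u + η)| ∂gauss 0 Gam :=
      integral_nonneg fun η => abs_nonneg _
    have hb' : BddAbove (Set.range (testGap gw ν μ)) := by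
      rwa [show testGap gw ν μ = testGap gw μ ν from funext fun f => abs_sub_comm _ _]
    have hiff : Integrable F (Qop H Gam μ) ↔ Integrable F (Qop H Gam ν) := by
      rw [integrable_Qop_iff hHm hGam hF hFg, integrable_Qop_iff hHm hGam hF hFg]
      exact ⟨integrable_of_bddAbove_testGap hb hC habs h0 hle,
        integrable_of_bddAbove_testGap hb' hC habs h0 hle⟩
    by_cases hi : Integrable F (Qop H Gam μ)
    · dsimp only
      rw [integral_Qop hHm hGam hF hi, integral_Qop hHm hGam hF (hiff.1 hi)]
      refine abs_integral_sub_le_mul_dG hb hC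
        (StronglyMeasurable.integral_prod_right' hFm.stronglyMeasurable).measurable fun u => ?_
      exact abs_integral_le_integral_abs.trans (hle u)
    · dsimp only
      rw [integral_undef hi, integral_undef (hiff.not.1 hi), sub_zero, abs_zero]
      exact mul_nonneg hC.le (Real.iSup_nonneg fun f => abs_nonneg _)
  · have hQ : dG gw2 (Qop H Gam μ) (Qop H Gam ν) = 0 :=
      Real.iSup_of_not_bddAbove fun h => hb (bddAbove_testGap_of_Qop hHm hGam h)
    rw [hQ, show dG gw μ ν = 0 from Real.iSup_of_not_bddAbove hb, mul_zero]

end EnKF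
end
end
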